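/- Suppose p = b+2 and 2 ≤ ℓ ≤ b+1. Then the trace of the linear endomorphism f ↦ ρ(g·f) of W equals (1/π_ℓ)·{ (b+1)·e_ℓ(n_1−1,…,n_ℓ−1) + e_{ℓ−1}(n_1−1,…,n_ℓ−1) + (−1)^{ℓ−1}·(b−ℓ+1) }. -/

import Mathlib

open Finset MvPolynomial

noncomputable section

/-- Value of the elementary symmetric polynomial `e_k` at the family `v` restricted to `A`. -/
def esymVal {α F : Type*} [DecidableEq α] [CommRing F] (A : Finset α) (k : ℕ) (v : α → F) : F :=
  ∑ B ∈ A.powersetCard k, ∏ i ∈ B, v i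

/-- Pochhammer symbol `(a)_k = a (a+1) ⋯ (a+k-1)`. -/
def poch (a : ℚ) (k : ℕ) : ℚ := ∏ i ∈ Finset.range k, (a + (i : ℚ))

variable {p : ℕ}

/-- The index in `Fin (∑ t, n t)` of the `i`-th element of the `j`-th consecutive block. -/
def emb (n : Fin p → ℕ) (j : Fin p) (i : Fin (n j)) : Fin (∑ t, n t) :=
  ⟨(∑ t ∈ Finset.univ.filter (fun t => t < j), n t) + i, by
    have hj : j ∉ Finset.univ.filter (fun t => t < j) := by simp
    have h2 : ∑ t ∈ insert j (Finset.univ.filter (fun t => t < j)), n t ≤ ∑ t, n t :=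
      Finset.sum_le_sum_of_subset (Finset.subset_univ _)
    rw [Finset.sum_insert hj] at h2
    have := i.isLt
    omega⟩

/-- The Young subgroup: permutations mapping each block onto itself. -/
def youngGroup (n : Fin p → ℕ) : Finset (Equiv.Perm (Fin (∑ t, n t))) :=
  Finset.univ.filter fun w => ∀ (j : Fin p) (i : Fin (n j)), ∃ i' : Fin (n j),
    w (emb n j i) = emb n j i'

/-- The action of a permutation of the variables on polynomials, as a linear map. -/
def permAct {σ : Type*} (w : Equiv.Perm σ) :
    MvPolynomial σ ℚ →ₗ[ℚ] MvPolynomial σ ℚ :=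
  (MvPolynomial.rename ⇑w).toLinearMap

/-- Averaging operator over the Young subgroup. -/
def rho (n : Fin p → ℕ) :
    MvPolynomial (Fin (∑ t, n t)) ℚ →ₗ[ℚ] MvPolynomial (Fin (∑ t, n t)) ℚ :=
  ((youngGroup n).card : ℚ)⁻¹ • ∑ h ∈ youngGroup n, permAct h

/-- The alternating (Vandermonde) polynomial in the variables `x_{t 0}, …, x_{t b}`. -/
def Delta {N b : ℕ} (t : Fin (b + 1) → Fin N) : MvPolynomial (Fin N) ℚ :=
  ∏ q ∈ Finset.univ.filter (fun q : Fin (b + 1) × Fin (b + 1) => q.1 < q.2),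
    (X (t q.1) - X (t q.2))

/-- The span of all `Δ(x_{i₁},…,x_{i_{b+1}})` with `i₁ < ⋯ < i_{b+1}`. -/
def hookSpan (N b : ℕ) : Submodule ℚ (MvPolynomial (Fin N) ℚ) :=
  Submodule.span ℚ {f | ∃ t : Fin (b + 1) → Fin N, StrictMono t ∧ f = Delta t}

/-- The first `ℓ` block labels. -/
def firstL (p ℓ : ℕ) : Finset (Fin p) := Finset.univ.filter fun i => (i : ℕ) < ℓ

/-!
Let `P` be the stochastic matrix whose entry `P j l` is the probability that `g` sends a uniformly
chosen element of block `j` into block `l`. If there are `b + 2` blocks, then for every permutation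
`g` the trace of `ρ g` on `W` equals `tr (adj P) - det P`.

Indeed, averaging over the Young subgroup kills every `Δ` having two variables in one block, so the
image of `ρ` is spanned by the averages `D k` of the `Δ` with one variable in each block except the
`k`-th. An alternating sum of these vanishes, which disposes of `D 0`. For `k ≠ 0`, evaluation at a
point constant on the blocks, where only blocks `0` and `k` share their value, kills every other
`D l`. As the images under `g` of random representatives of distinct blocks are independent, it
takes `ρ g (D k)` to a determinant obtained from the rows of `P`, in which the shared value turns
the minor into `(adj P) k k - (adj P) 0 k`. Summing over `k` gives the trace formula, because
`∑ k, (adj P) 0 k = det P` for a stochastic `P`.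

For the cycle through the first elements of the blocks `0, …, c`, the matrix `P` is the weighted
adjacency matrix of a cycle with loops, and so are the matrices computing the diagonal of `adj P`;
their determinants have two terms, one from the loops and one from the cycle.
-/

section Determinants

open Matrix

variable {R : Type*} [CommRing R] {m : ℕ}

theorem adjugate_transvection {κ : Type*} [Fintype κ] [DecidableEq κ] {i j : κ} (hij : i ≠ j)
    (c : R) : (transvection i j c).adjugate = transvection i j (-c) := by
  have hinv : transvection i j c * transvection i j (-c) = 1 := by
    rw [transvection_mul_transvection_same _ _ hij, add_neg_cancel, transvection_zero]
  calc (transvection i j c).adjugate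
      = (transvection i j c).adjugate * (transvection i j c * transvection i j (-c)) := by
        rw [hinv, mul_one]
    _ = transvection i j (-c) := by
        rw [← mul_assoc, adjugate_mul, det_transvection_of_ne _ _ hij, one_smul, one_mul]

theorem adjugate_mul_transvection_apply_self {κ : Type*} [Fintype κ] [DecidableEq κ]
    (M : Matrix κ κ R) {i k : κ} (hki : k ≠ i) :
    (M * transvection k i 1).adjugate k k = M.adjugate k k - M.adjugate i k := by
  rw [adjugate_mul_distrib, adjugate_transvection hki, transvection_mul_apply_same]
  ring

-- Merging column `k` of `M` into column `i` makes row `k` of `Z` superfluous.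
theorem det_submatrix_succAbove_mul (M : Matrix (Fin (m + 1)) (Fin (m + 1)) R)
    (Z : Matrix (Fin (m + 1)) (Fin m) R) {i k : Fin (m + 1)} (hki : k ≠ i) (hZ : Z i = Z k) :
    ((M * Z).submatrix k.succAbove id).det
      = (M.adjugate k k - M.adjugate i k) * (Z.submatrix k.succAbove id).det := by
  set A := M * transvection k i 1 with hA
  have hMZ : (M * Z).submatrix k.succAbove id
      = A.submatrix k.succAbove k.succAbove * Z.submatrix k.succAbove id := by
    obtain ⟨i, rfl⟩ := Fin.exists_succAbove_eq hki.symm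
    ext x y
    have hcol : ∀ z, A (k.succAbove x) (k.succAbove z)
        = M (k.succAbove x) (k.succAbove z) + if z = i then M (k.succAbove x) k else 0 := by
      intro z
      split_ifs with h
      · rw [h, hA, mul_transvection_apply_same, one_mul]
      · rw [hA, mul_transvection_apply_of_ne _ _ _ _ (by simpa using h), add_zero]
    simp [mul_apply, Fin.sum_univ_succAbove _ k, hcol, add_mul, sum_add_distrib, ← hZ, add_comm]
  have hdet : (A.submatrix k.succAbove k.succAbove).det = M.adjugate k k - M.adjugate i k := by
    rw [← adjugate_mul_transvection_apply_self M hki, adjugate_fin_succ_eq_det_submatrix,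
      Even.neg_one_pow ⟨_, rfl⟩, one_mul]
  rw [hMZ, det_mul, hdet]

theorem sum_adjugate_row {κ : Type*} [Fintype κ] [DecidableEq κ] {M : Matrix κ κ R}
    (hM : M *ᵥ 1 = 1) (i : κ) : ∑ k, M.adjugate i k = M.det := by
  have h : M.adjugate *ᵥ 1 = M.det • 1 := by
    conv_lhs => rw [← hM, mulVec_mulVec, adjugate_mul, smul_mulVec, one_mulVec]
  simpa [mulVec, dotProduct] using congrFun h i

section WeightedCycle

variable (c : Fin (m + 1)) (a u : Fin (m + 1) → R)

/-- The weighted adjacency matrix of the cycle `0 → 1 → ⋯ → c → 0` with a loop at every vertex: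
the loop at `j` has weight `a j`, the edge leaving `j` has weight `u j`, and the vertices beyond `c`
carry two loops. -/
def weightedCycle : Matrix (Fin (m + 1)) (Fin (m + 1)) R :=
  diagonal a + diagonal u * c.cycleRange.permMatrix R

theorem weightedCycle_apply (i j : Fin (m + 1)) :
    weightedCycle c a u i j
      = (if i = j then a i else 0) + if c.cycleRange i = j then u i else 0 := by
  simp [weightedCycle, diagonal_apply, Equiv.Perm.permMatrix, PEquiv.toMatrix_apply, eq_comm]

theorem cycleRange_succ_eq_succ_iff {i : Fin m} :
    c.cycleRange i.succ = i.succ ↔ c < i.succ := by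
  rcases lt_trichotomy i.succ c with h | h | h
  · simp [Fin.ext_iff, Fin.coe_cycleRange_of_lt h, h.not_gt]
  · simp only [Fin.cycleRange_of_eq h, (Fin.succ_ne_zero i).symm, h.not_gt]
  · simp [Fin.cycleRange_of_gt h, h]

theorem cycleRange_succ_ne_succ_of_lt {i j : Fin m} (hji : j < i) :
    c.cycleRange i.succ ≠ j.succ := by
  rcases lt_trichotomy i.succ c with h | h | h
  · have := Fin.coe_cycleRange_of_lt h
    grind
  · rw [Fin.cycleRange_of_eq h]
    exact (Fin.succ_ne_zero j).symm
  · simpa [Fin.cycleRange_of_gt h] using hji.ne'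

theorem succAbove_eq_succ_iff {i : Fin m} : c.succAbove i = i.succ ↔ c < c.succAbove i := by
  rw [Fin.succAbove]
  split_ifs <;> grind

theorem det_weightedCycle_submatrix_succ :
    ((weightedCycle c a u).submatrix Fin.succ Fin.succ).det
      = ∏ i : Fin m, if i.succ ≤ c then a i.succ else a i.succ + u i.succ := by
  rw [det_of_isUpperTriangular]
  · refine prod_congr rfl fun i _ => ?_
    simp only [submatrix_apply, weightedCycle_apply, cycleRange_succ_eq_succ_iff, ← not_le]
    split_ifs <;> simp_all
  · intro i j hji
    have hji : j < i := hji
    simp [weightedCycle_apply, cycleRange_succ_ne_succ_of_lt c hji, ne_of_gt hji]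

theorem det_weightedCycle_submatrix_succAbove :
    ((weightedCycle c a u).submatrix c.succAbove Fin.succ).det
      = ∏ i : Fin m, if c.succAbove i ≤ c then u (c.succAbove i)
          else a (c.succAbove i) + u (c.succAbove i) := by
  rw [det_of_isLowerTriangular]
  · refine prod_congr rfl fun i _ => ?_
    simp only [submatrix_apply, weightedCycle_apply, Fin.cycleRange_succAbove,
      succAbove_eq_succ_iff, ← not_le]
    split_ifs <;> simp_all
  · intro i j hij
    have hij : i < j := hij
    have hne : c.succAbove i ≠ j.succ := by
      rw [Fin.succAbove]
      split_ifs <;> grind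
    simp [weightedCycle_apply, hne, hij.ne]

theorem det_weightedCycle :
    (weightedCycle c a u).det
      = (∏ j ∈ Iic c, a j + (-1) ^ (c : ℕ) * ∏ j ∈ Iic c, u j) * ∏ j ∈ Ioi c, (a j + u j) := by
  have hsplit : ∀ f : Fin (m + 1) → R, (∏ j ∈ Iic c, f j) * ∏ j ∈ Ioi c, (a j + u j)
      = ∏ j, if j ≤ c then f j else a j + u j := fun f => by
    rw [prod_ite]
    congr 2 <;> ext <;> simp
  have hzero : ∀ i, c.cycleRange i = 0 ↔ i = c := fun i => by
    rw [← Fin.cycleRange_self c, EmbeddingLike.apply_eq_iff_eq]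
  have hcol : ∀ i : Fin (m + 1), (-1) ^ (i : ℕ) * weightedCycle c a u i 0
      = (if i = 0 then a 0 else 0) + if i = c then (-1) ^ (c : ℕ) * u c else 0 := by
    intro i
    rw [weightedCycle_apply, mul_add]
    simp only [hzero]
    congr 1 <;> split_ifs with h <;> simp [h]
  calc (weightedCycle c a u).det
      = a 0 * ((weightedCycle c a u).submatrix Fin.succ Fin.succ).det
        + (-1) ^ (c : ℕ) * (u c * ((weightedCycle c a u).submatrix c.succAbove Fin.succ).det) := by
        rw [det_succ_column_zero]
        simp only [hcol, add_mul, sum_add_distrib]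
        simp [mul_assoc]
    _ = (∏ j, if j ≤ c then a j else a j + u j)
        + (-1) ^ (c : ℕ) * ∏ j, if j ≤ c then u j else a j + u j := by
        rw [det_weightedCycle_submatrix_succ, det_weightedCycle_submatrix_succAbove,
          Fin.prod_univ_succ, Fin.prod_univ_succAbove _ c]
        simp
    _ = _ := by rw [add_mul, mul_assoc, hsplit, hsplit]

-- Replacing row `k` by the unit vector `e_k` yields another weighted cycle.
theorem adjugate_weightedCycle_apply_self (k : Fin (m + 1)) :
    (weightedCycle c a u).adjugate k k
      = (weightedCycle c (Function.update a k 1) (Function.update u k 0)).det := by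
  rw [adjugate_apply]
  congr 1
  ext i j
  rcases eq_or_ne i k with rfl | hik
  · simp [weightedCycle_apply, Pi.single_apply, eq_comm]
  · simp [weightedCycle_apply, hik]

variable {c a u}

theorem det_weightedCycle_of_add_eq_one (h : ∀ j, a j + u j = 1) :
    (weightedCycle c a u).det = ∏ j ∈ Iic c, a j + (-1) ^ (c : ℕ) * ∏ j ∈ Iic c, u j := by
  rw [det_weightedCycle, prod_congr rfl fun j _ => h j, prod_const_one, mul_one]

theorem adjugate_weightedCycle_apply_self_of_add_eq_one (h : ∀ j, a j + u j = 1)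
    (k : Fin (m + 1)) :
    (weightedCycle c a u).adjugate k k
      = if k ≤ c then ∏ j ∈ (Iic c).erase k, a j else (weightedCycle c a u).det := by
  have hupdate : ∀ j, Function.update a k 1 j + Function.update u k 0 j = 1 := fun j => by
    rcases eq_or_ne j k with rfl | hjk <;> simp [*]
  rw [adjugate_weightedCycle_apply_self, det_weightedCycle_of_add_eq_one hupdate,
    det_weightedCycle_of_add_eq_one h]
  split_ifs with hk
  · have hmem : k ∈ Iic c := mem_Iic.2 hk
    simp [prod_update_of_mem hmem, sdiff_singleton_eq_erase]
  · have hmem : k ∉ Iic c := by simpa using hk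
    rw [prod_update_of_notMem hmem, prod_update_of_notMem hmem]

theorem trace_adjugate_sub_det_weightedCycle (h : ∀ j, a j + u j = 1) :
    (weightedCycle c a u).adjugate.trace - (weightedCycle c a u).det
      = ∑ k ∈ Iic c, ∏ j ∈ (Iic c).erase k, a j
        + ((m : R) - c - 1) * (∏ j ∈ Iic c, a j + (-1) ^ (c : ℕ) * ∏ j ∈ Iic c, u j) := by
  have hIic : univ.filter (· ≤ c) = Iic c := by ext; simp
  have hIoi : univ.filter (fun k => ¬ k ≤ c) = Ioi c := by ext; simp
  have hc : (c : ℕ) ≤ m := c.is_le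
  simp only [Matrix.trace, diag_apply, adjugate_weightedCycle_apply_self_of_add_eq_one h, sum_ite,
    sum_const, hIic, hIoi, det_weightedCycle_of_add_eq_one h, Fin.card_Ioi, nsmul_eq_mul]
  rw [Nat.add_sub_cancel, Nat.cast_sub hc]
  ring

end WeightedCycle

end Determinants

section Trace

variable {K V ι : Type*} [Field K] [AddCommGroup V] [Module K V] [Fintype ι] {v : ι → V}
  {φ : ι → V →ₗ[K] K}

theorem eq_sum_smul_of_mem_span_range (hφ : ∀ i j, i ≠ j → φ i (v j) = 0)
    (hφv : ∀ i, φ i (v i) ≠ 0) {x : V} (hx : x ∈ Submodule.span K (Set.range v)) :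
    x = ∑ i, (φ i x / φ i (v i)) • v i := by
  obtain ⟨c, rfl⟩ := (Submodule.mem_span_range_iff_exists_fun K).1 hx
  have hc : ∀ i, φ i (∑ j, c j • v j) = c i * φ i (v i) := fun i => by
    rw [map_sum, sum_eq_single i (fun j _ hj => by simp [hφ i j hj.symm]) (by simp), map_smul,
      smul_eq_mul]
  exact sum_congr rfl fun i _ => by rw [hc, mul_div_cancel_right₀ _ (hφv i)]

theorem trace_restrict_eq_sum_div {W : Submodule K V} [FiniteDimensional K W] {T : V →ₗ[K] V}
    (hW : ∀ x ∈ W, T x ∈ W) (hv : ∀ i, v i ∈ W)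
    (hT : ∀ x ∈ W, T x ∈ Submodule.span K (Set.range v))
    (hφ : ∀ i j, i ≠ j → φ i (v j) = 0) (hφv : ∀ i, φ i (v i) ≠ 0) :
    LinearMap.trace K W (T.restrict hW) = ∑ i, φ i (T (v i)) / φ i (v i) := by
  have hrank_one : T.restrict hW = ∑ i, LinearMap.smulRight
      ((φ i (v i))⁻¹ • φ i ∘ₗ T ∘ₗ W.subtype) (⟨v i, hv i⟩ : W) := by
    ext w
    rw [LinearMap.coe_restrict_apply, eq_sum_smul_of_mem_span_range hφ hφv (hT w w.2)]
    simp [div_eq_inv_mul]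
  rw [hrank_one, map_sum]
  exact sum_congr rfl fun i _ => by
    rw [LinearMap.trace_smulRight]
    simp [div_eq_inv_mul]

end Trace

section Averaging

open BigOperators Matrix

variable {α κ ι : Type*} [Fintype α] [DecidableEq κ] (π : α → κ)

/-- The transition matrix that `g` induces on the blocks, i.e. the fibres of `π`: its row `j` is the
law of the block containing `g a` for `a` uniform in block `j`. -/
def transitionMatrix (g : Equiv.Perm α) : Matrix κ κ ℚ :=
  of fun j l => 𝔼 a with π a = j, if π (g a) = l then 1 else 0

variable {π}

theorem transitionMatrix_mul_apply [Fintype κ] {μ : Type*} (g : Equiv.Perm α) (Z : Matrix κ μ ℚ)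
    (j : κ) (y : μ) :
    (transitionMatrix π g * Z) j y = 𝔼 a with π a = j, Z (π (g a)) y := by
  simp_rw [mul_apply, transitionMatrix, of_apply, expect_mul]
  rw [← expect_sum_comm]
  simp

theorem transitionMatrix_mulVec_one [Fintype κ] (hπ : Function.Surjective π) (g : Equiv.Perm α) :
    transitionMatrix π g *ᵥ 1 = 1 := by
  ext j
  obtain ⟨a, rfl⟩ := hπ j
  have hne : (univ.filter fun x => π x = π a).Nonempty := ⟨a, by simp⟩
  simp only [mulVec, dotProduct, transitionMatrix, of_apply, Pi.one_apply, mul_one]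
  rw [← expect_sum_comm]
  simp [expect_const hne]

theorem transitionMatrix_apply_of_forall_ne {g : Equiv.Perm α} {x : α}
    (hg : ∀ a, π a = π x → a ≠ x → π (g a) = π x) (l : κ) :
    transitionMatrix π g (π x) l
      = (if π x = l then 1 - (#{a | π a = π x} : ℚ)⁻¹ else 0)
        + if π (g x) = l then (#{a | π a = π x} : ℚ)⁻¹ else 0 := by
  classical
  set A : Finset α := {a | π a = π x} with hA
  have hx : x ∈ A := by simp [hA]
  have hcard : (#A : ℚ) ≠ 0 := Nat.cast_ne_zero.2 (card_ne_zero_of_mem hx)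
  have hstay : ∀ a ∈ A.erase x, (if π (g a) = l then (1 : ℚ) else 0) = if π x = l then 1 else 0 :=
    fun a ha => by
      rw [hg a (by simpa [hA] using mem_of_mem_erase ha) (ne_of_mem_erase ha)]
  rw [transitionMatrix, of_apply, expect_eq_sum_div_card, ← hA, ← add_sum_erase _ _ hx,
    sum_congr rfl hstay, sum_const, nsmul_eq_mul, cast_card_erase_of_mem hx]
  split_ifs <;> field_simp <;> ring

variable [DecidableEq α]

variable (π) in
/-- The Young subgroup of the permutations preserving every fibre of `π`, as a finite set. -/
def fiberPerms : Finset (Equiv.Perm α) := univ.filter fun w => ∀ a, π (w a) = π a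

theorem mem_fiberPerms {w : Equiv.Perm α} : w ∈ fiberPerms π ↔ ∀ a, π (w a) = π a := by
  simp [fiberPerms]

theorem one_mem_fiberPerms : 1 ∈ fiberPerms π := by simp [mem_fiberPerms]

theorem mul_mem_fiberPerms_iff {w : Equiv.Perm α} (hw : w ∈ fiberPerms π) (h : Equiv.Perm α) :
    h * w ∈ fiberPerms π ↔ h ∈ fiberPerms π := by
  rw [mem_fiberPerms] at hw
  simp only [mem_fiberPerms, Equiv.Perm.mul_apply]
  rw [← w.forall_congr_right (q := fun a => π (h a) = π a)]
  simp only [hw]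

theorem swap_mem_fiberPerms {a b : α} (hab : π a = π b) : Equiv.swap a b ∈ fiberPerms π := by
  rw [mem_fiberPerms]
  intro x
  rw [Equiv.swap_apply_def]
  split_ifs <;> simp_all

theorem exists_mem_fiberPerms_comp_eq {s t : ι → α} (hs : Function.Injective (π ∘ s))
    (hst : π ∘ s = π ∘ t) : ∃ w ∈ fiberPerms π, ⇑w ∘ s = t := by
  let σ : κ → Equiv.Perm α := Function.extend (π ∘ s) (fun i => Equiv.swap (s i) (t i)) 1
  have hσs : ∀ i, σ (π (s i)) = Equiv.swap (s i) (t i) := fun i => hs.extend_apply _ _ i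
  have hσ : ∀ k, σ k ∈ fiberPerms π ∧ σ k * σ k = 1 := fun k => by
    by_cases hk : ∃ i, (π ∘ s) i = k
    · obtain ⟨i, rfl⟩ := hk
      rw [Function.comp_apply, hσs]
      exact ⟨swap_mem_fiberPerms (congrFun hst i), Equiv.swap_mul_self _ _⟩
    · simp only [σ, Function.extend_apply' _ _ _ hk, Pi.one_apply, one_mul, and_true,
        one_mem_fiberPerms]
  have hπ : ∀ a, π (σ (π a) a) = π a := fun a => mem_fiberPerms.1 (hσ (π a)).1 a
  have hinv : Function.Involutive fun a => σ (π a) a := fun a => by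
    simp only [hπ, ← Equiv.Perm.mul_apply, (hσ (π a)).2, Equiv.Perm.one_apply]
  refine ⟨hinv.toPerm, mem_fiberPerms.2 hπ, funext fun i => ?_⟩
  simp [hσs]

variable [Fintype ι] [DecidableEq ι]

/- Both sides equal the average of `F (h ∘ c)` over independent `h` and `c`: the tuples `t` and `c`
differ by an element of the group, and `h` permutes the tuples `c`. -/
theorem expect_fiberPerms_comp {t : ι → α} (ht : Function.Injective (π ∘ t))
    (F : (ι → α) → ℚ) :
    𝔼 h ∈ fiberPerms π, F (⇑h ∘ t)
      = 𝔼 c ∈ Fintype.piFinset fun i => univ.filter fun a => π a = π (t i), F c := by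
  set C := Fintype.piFinset fun i => univ.filter fun a => π a = π (t i) with hC
  have mem_C : ∀ c, c ∈ C ↔ π ∘ t = π ∘ c := fun c => by
    simp [hC, Fintype.mem_piFinset, funext_iff, eq_comm]
  have avg_group : ∀ c ∈ C, 𝔼 h ∈ fiberPerms π, F (⇑h ∘ c) = 𝔼 h ∈ fiberPerms π, F (⇑h ∘ t) := by
    intro c hc
    obtain ⟨w, hw, rfl⟩ := exists_mem_fiberPerms_comp_eq ht ((mem_C c).1 hc)
    exact expect_equiv (Equiv.mulRight w) (fun h => by simp [mul_mem_fiberPerms_iff hw])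
      fun h _ => rfl
  have avg_tuples : ∀ h ∈ fiberPerms π, 𝔼 c ∈ C, F (⇑h ∘ c) = 𝔼 c ∈ C, F c := by
    intro h hh
    refine expect_equiv (Equiv.arrowCongr (Equiv.refl ι) h) (fun c => ?_) fun c _ => rfl
    simp [mem_C, funext_iff, mem_fiberPerms.1 hh]
  calc 𝔼 h ∈ fiberPerms π, F (⇑h ∘ t)
      = 𝔼 c ∈ C, 𝔼 h ∈ fiberPerms π, F (⇑h ∘ c) := by
        rw [expect_congr rfl avg_group, expect_const ⟨t, (mem_C t).2 rfl⟩]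
    _ = 𝔼 h ∈ fiberPerms π, 𝔼 c ∈ C, F (⇑h ∘ c) := expect_comm ..
    _ = 𝔼 c ∈ C, F c := by
        rw [expect_congr rfl avg_tuples, expect_const ⟨1, one_mem_fiberPerms⟩]

theorem multilinearMap_expect {α E : ι → Type*} {F : Type*} [∀ i, AddCommMonoid (E i)]
    [∀ i, Module ℚ≥0 (E i)] [AddCommMonoid F] [Module ℚ≥0 F] (f : MultilinearMap ℚ≥0 E F)
    (A : ∀ i, Finset (α i)) (v : ∀ i, α i → E i) :
    f (fun i => 𝔼 a ∈ A i, v i a) = 𝔼 c ∈ Fintype.piFinset A, f fun i => v i (c i) := by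
  simp_rw [Finset.expect, f.map_smul_univ, f.map_sum_finset]
  simp [Fintype.card_piFinset]

theorem expect_det_submatrix [Fintype κ] {t : ι → α} (ht : Function.Injective (π ∘ t))
    (g : Equiv.Perm α) (Z : Matrix κ ι ℚ) :
    𝔼 h ∈ fiberPerms π, (Z.submatrix (π ∘ g ∘ h ∘ t) id).det
      = ((transitionMatrix π g * Z).submatrix (π ∘ t) id).det := by
  have hrows : (transitionMatrix π g * Z).submatrix (π ∘ t) id
      = of fun i => 𝔼 a with π a = π (t i), Z (π (g a)) := by
    ext i y
    simp [transitionMatrix_mul_apply]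
  rw [hrows, expect_fiberPerms_comp ht fun c => (Z.submatrix (π ∘ g ∘ c) id).det]
  exact (multilinearMap_expect (detRowAlternating.toMultilinearMap.restrictScalars ℚ≥0) _
    fun _ a => Z (π (g a))).symm

end Averaging

section Delta

open Matrix

variable {N b : ℕ}

theorem Delta_eq_det_vandermonde (t : Fin (b + 1) → Fin N) :
    Delta t = (vandermonde fun i => -X (t i)).det := by
  simp_rw [det_vandermonde, neg_sub_neg, prod_sigma']
  exact prod_bij' (fun q _ => ⟨q.1, q.2⟩) (fun q _ => (q.1, q.2)) (by simp) (by simp) (by simp)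
    (by simp) (by simp)

theorem permAct_Delta (w : Equiv.Perm (Fin N)) (t : Fin (b + 1) → Fin N) :
    permAct w (Delta t) = Delta (w ∘ t) := by
  simp [permAct, Delta]

theorem Delta_comp_perm (t : Fin (b + 1) → Fin N) (e : Equiv.Perm (Fin (b + 1))) :
    Delta (t ∘ e) = (e.sign : ℤ) • Delta t := by
  simp only [Delta_eq_det_vandermonde, zsmul_eq_mul, ← det_permute]
  rfl

theorem Delta_eq_zero_of_not_injective {t : Fin (b + 1) → Fin N} (ht : ¬ Function.Injective t) :
    Delta t = 0 := by
  obtain ⟨i, j, hij, hne⟩ := Function.not_injective_iff.1 ht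
  rw [Delta_eq_det_vandermonde]
  exact det_zero_of_row_eq hne (by ext; simp [vandermonde_apply, hij])

-- Expand a determinant whose first two columns are both constantly `1` along the first one.
theorem sum_neg_one_pow_smul_Delta (t : Fin (b + 2) → Fin N) :
    ∑ k : Fin (b + 2), (-1 : ℤ) ^ (k : ℕ) • Delta (t ∘ k.succAbove) = 0 := by
  let A : Matrix (Fin (b + 2)) (Fin (b + 2)) (MvPolynomial (Fin N) ℚ) :=
    of fun i => Fin.cons 1 fun j : Fin (b + 1) => (-X (t i)) ^ (j : ℕ)
  have hA : A.det = 0 := det_zero_of_column_eq (Fin.succ_ne_zero 0).symm fun i => by simp [A]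
  rw [← hA, det_succ_column_zero]
  refine sum_congr rfl fun k _ => ?_
  rw [Delta_eq_det_vandermonde, zsmul_eq_mul, show A k 0 = 1 from rfl, mul_one]
  push_cast
  rfl

theorem Delta_mem_hookSpan (t : Fin (b + 1) → Fin N) : Delta t ∈ hookSpan N b := by
  by_cases ht : Function.Injective t
  · have hsorted : Delta (t ∘ Tuple.sort t) ∈ hookSpan N b := Submodule.subset_span
      ⟨_, (Tuple.monotone_sort t).strictMono_of_injective (ht.comp (Tuple.sort t).injective), rfl⟩
    have h := zsmul_mem hsorted ((Tuple.sort t)⁻¹.sign : ℤ)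
    rw [← Delta_comp_perm] at h
    convert h
    ext
    simp
  · rw [Delta_eq_zero_of_not_injective ht]
    exact zero_mem _

instance finiteDimensional_hookSpan : FiniteDimensional ℚ (hookSpan N b) := by
  refine FiniteDimensional.span_of_finite ℚ ((Set.finite_range (Delta (N := N) (b := b))).subset ?_)
  rintro f ⟨t, -, rfl⟩
  exact ⟨t, rfl⟩

end Delta

section Blocks

variable (n : Fin p → ℕ)

/-- The label of the block containing a given index, inverting `emb`. -/
def block (a : Fin (∑ j, n j)) : Fin p := (finSigmaFinEquiv.symm a).1

variable {n}

theorem emb_eq_finSigmaFinEquiv (j : Fin p) (i : Fin (n j)) :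
    emb n j i = finSigmaFinEquiv ⟨j, i⟩ := by
  ext
  rw [finSigmaFinEquiv_apply]
  simp only [emb, add_left_inj]
  exact sum_bij' (fun k hk => (⟨k, by simpa using hk⟩ : Fin j)) (fun k _ => k.castLE j.is_lt.le)
    (by simp) (fun k _ => by simp [Fin.lt_def, -Fin.val_fin_lt]) (by simp) (by simp) (by simp)

theorem block_eq_iff {a : Fin (∑ j, n j)} {j : Fin p} :
    block n a = j ↔ ∃ i, a = emb n j i := by
  simp only [emb_eq_finSigmaFinEquiv, ← Equiv.symm_apply_eq]
  constructor
  · rintro rfl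
    exact ⟨_, rfl⟩
  · rintro ⟨i, hi⟩
    simp [block, hi]

theorem block_emb (j : Fin p) (i : Fin (n j)) : block n (emb n j i) = j :=
  block_eq_iff.2 ⟨i, rfl⟩

theorem emb_injective (j : Fin p) : Function.Injective (emb n j) := fun i i' h =>
  Fin.ext (by simpa [emb] using h)

theorem card_filter_block_eq (j : Fin p) : #{a | block n a = j} = n j := by
  have himage : univ.filter (fun a => block n a = j) = univ.image (emb n j) := by
    ext a
    simp only [mem_filter, mem_image, mem_univ, true_and, block_eq_iff, eq_comm (b := a)]
  rw [himage, card_image_of_injective _ (emb_injective j), card_fin]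

theorem youngGroup_eq_fiberPerms : youngGroup n = fiberPerms (block n) := by
  ext w
  simp only [youngGroup, mem_filter, mem_univ, true_and, mem_fiberPerms, ← block_eq_iff]
  refine ⟨fun hw a => ?_, fun hw j i => by rw [hw, block_emb]⟩
  obtain ⟨i, hi⟩ := block_eq_iff.1 (rfl : block n a = block n a)
  simpa only [← hi] using hw (block n a) i

end Blocks

section Averages

open BigOperators

variable {n : Fin p → ℕ} {b : ℕ}

theorem rho_eq_expect (f : MvPolynomial (Fin (∑ j, n j)) ℚ) :
    rho n f = 𝔼 h ∈ fiberPerms (block n), permAct h f := by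
  rw [← youngGroup_eq_fiberPerms, Finset.expect, ← NNRat.cast_smul_eq_nnqsmul ℚ]
  simp [rho]

theorem rho_permAct {w : Equiv.Perm (Fin (∑ j, n j))} (hw : w ∈ fiberPerms (block n))
    (f : MvPolynomial (Fin (∑ j, n j)) ℚ) : rho n (permAct w f) = rho n f := by
  simp only [rho_eq_expect]
  refine expect_equiv (Equiv.mulRight w) (fun h => by simp [mul_mem_fiberPerms_iff hw])
    fun h _ => ?_
  simp [permAct, rename_rename, Equiv.Perm.coe_mul]

theorem rho_Delta_mem_hookSpan (t : Fin (b + 1) → Fin (∑ j, n j)) :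
    rho n (Delta t) ∈ hookSpan (∑ j, n j) b := by
  simp only [rho, LinearMap.smul_apply, LinearMap.sum_apply, permAct_Delta]
  exact Submodule.smul_mem _ _ (sum_mem fun h _ => Delta_mem_hookSpan _)

theorem rho_Delta_eq_zero {t : Fin (b + 1) → Fin (∑ j, n j)}
    (ht : ¬ Function.Injective (block n ∘ t)) : rho n (Delta t) = 0 := by
  by_cases htinj : Function.Injective t
  · obtain ⟨i, j, hij, hne⟩ := Function.not_injective_iff.1 ht
    have hswap : Delta (Equiv.swap (t i) (t j) ∘ t) = -Delta t := by
      rw [htinj.swap_comp, Delta_comp_perm, Equiv.Perm.sign_swap hne]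
      simp
    have h := rho_permAct (swap_mem_fiberPerms hij) (Delta t)
    rw [permAct_Delta, hswap, map_neg] at h
    exact neg_eq_self.1 h
  · rw [Delta_eq_zero_of_not_injective htinj, map_zero]

end Averages

section OmittedBlock

theorem exists_eq_succAbove_comp_perm {m : ℕ} {f : Fin m → Fin (m + 1)}
    (hf : Function.Injective f) : ∃ (k : Fin (m + 1)) (e : Equiv.Perm (Fin m)),
      f = k.succAbove ∘ e := by
  obtain ⟨k, hk⟩ : ∃ k, ∀ i, f i ≠ k := by
    by_contra! hsurj
    simpa using Fintype.card_le_of_surjective f hsurj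
  choose e he using fun i => Fin.exists_succAbove_eq (hk i)
  have he_inj : Function.Injective e := fun i j hij => hf (by rw [← he, ← he, hij])
  exact ⟨k, Equiv.ofBijective e (Finite.injective_iff_bijective.1 he_inj),
    funext fun i => (he i).symm⟩

variable {b : ℕ} {n : Fin (b + 2) → ℕ} {s : Fin (b + 2) → Fin (∑ j, n j)}

theorem rho_Delta_comp_succAbove_mem_span (k : Fin (b + 2)) :
    rho n (Delta (s ∘ k.succAbove)) ∈ Submodule.span ℚ
      (Set.range fun k : Fin (b + 1) => rho n (Delta (s ∘ k.succ.succAbove))) := by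
  have hsucc : ∀ k : Fin (b + 1), rho n (Delta (s ∘ k.succ.succAbove)) ∈ Submodule.span ℚ
      (Set.range fun k : Fin (b + 1) => rho n (Delta (s ∘ k.succ.succAbove))) :=
    fun k => Submodule.subset_span ⟨k, rfl⟩
  cases k using Fin.cases with
  | succ k => exact hsucc k
  | zero =>
    have hrel : ∑ k : Fin (b + 2), (-1 : ℤ) ^ (k : ℕ) • rho n (Delta (s ∘ k.succAbove)) = 0 := by
      simpa only [map_sum, map_zsmul, map_zero] using
        congrArg (rho n) (sum_neg_one_pow_smul_Delta s)
    replace hrel := (Fin.sum_univ_succ _).symm.trans hrel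
    simp only [Fin.val_zero, pow_zero, one_smul] at hrel
    rw [eq_neg_of_add_eq_zero_left hrel]
    exact neg_mem (sum_mem fun k _ => zsmul_mem (hsucc k) _)

theorem rho_Delta_mem_span (hs : ∀ j, block n (s j) = j) (t : Fin (b + 1) → Fin (∑ j, n j)) :
    rho n (Delta t) ∈ Submodule.span ℚ
      (Set.range fun k : Fin (b + 1) => rho n (Delta (s ∘ k.succ.succAbove))) := by
  by_cases ht : Function.Injective (block n ∘ t)
  · obtain ⟨k, e, hke⟩ := exists_eq_succAbove_comp_perm ht
    have hcomp : block n ∘ (s ∘ k.succAbove ∘ e) = block n ∘ t := by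
      rw [hke]
      exact funext fun i => hs _
    obtain ⟨w, hw, rfl⟩ := exists_mem_fiberPerms_comp_eq (hcomp ▸ ht) hcomp
    rw [← permAct_Delta, rho_permAct hw, ← Function.comp_assoc, Delta_comp_perm, map_zsmul]
    exact zsmul_mem (rho_Delta_comp_succAbove_mem_span k) _
  · rw [rho_Delta_eq_zero ht]
    exact zero_mem _

end OmittedBlock

section BlockEval

open BigOperators Matrix

variable {n : Fin p → ℕ} {b : ℕ}

/-- Evaluation at the point whose coordinates are constantly `-y j` on block `j`; the sign makes
the values of `Delta` Vandermonde determinants. -/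
def blockEval (n : Fin p → ℕ) (y : Fin p → ℚ) : MvPolynomial (Fin (∑ j, n j)) ℚ →ₗ[ℚ] ℚ :=
  (aeval fun a => -y (block n a)).toLinearMap

variable (y : Fin p → ℚ)

theorem blockEval_Delta (t : Fin (b + 1) → Fin (∑ j, n j)) :
    blockEval n y (Delta t) = (vandermonde (y ∘ block n ∘ t)).det := by
  rw [Delta_eq_det_vandermonde, blockEval, AlgHom.toLinearMap_apply, AlgHom.map_det]
  congr 1
  ext
  simp [vandermonde_apply]

theorem blockEval_permAct {h : Equiv.Perm (Fin (∑ j, n j))} (hh : h ∈ fiberPerms (block n))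
    (f : MvPolynomial (Fin (∑ j, n j)) ℚ) : blockEval n y (permAct h f) = blockEval n y f := by
  simp [blockEval, permAct, aeval_rename, Function.comp_def, mem_fiberPerms.1 hh]

theorem map_rho (φ : MvPolynomial (Fin (∑ j, n j)) ℚ →ₗ[ℚ] ℚ)
    (f : MvPolynomial (Fin (∑ j, n j)) ℚ) :
    φ (rho n f) = 𝔼 h ∈ fiberPerms (block n), φ (permAct h f) := by
  rw [rho_eq_expect]
  exact map_expect (φ.restrictScalars ℚ≥0) _ _

theorem blockEval_rho (f : MvPolynomial (Fin (∑ j, n j)) ℚ) :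
    blockEval n y (rho n f) = blockEval n y f := by
  rw [map_rho, expect_congr rfl fun h hh => blockEval_permAct y hh f,
    expect_const ⟨1, one_mem_fiberPerms⟩]

theorem blockEval_rho_permAct_rho_Delta (g : Equiv.Perm (Fin (∑ j, n j)))
    {t : Fin (b + 1) → Fin (∑ j, n j)} (ht : Function.Injective (block n ∘ t)) :
    blockEval n y (rho n (permAct g (rho n (Delta t))))
      = ((transitionMatrix (block n) g * of fun j (i : Fin (b + 1)) => y j ^ (i : ℕ)).submatrix
          (block n ∘ t) id).det := by
  rw [blockEval_rho, ← LinearMap.comp_apply, map_rho, ← expect_det_submatrix ht]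
  refine expect_congr rfl fun h _ => ?_
  rw [LinearMap.comp_apply, permAct_Delta, permAct_Delta, blockEval_Delta]
  rfl

end BlockEval

section TraceFormula

open Matrix

variable {b : ℕ}

/-- The labels `0, …, b + 1` as rational numbers, with label `0` replaced by label `k + 1`: the
points at which evaluation detects the averaged `Delta` omitting block `k + 1` and no other. -/
def mergedLabel (k : Fin (b + 1)) (j : Fin (b + 2)) : ℚ :=
  ((Function.update id 0 k.succ j : Fin (b + 2)) : ℕ)

theorem mergedLabel_zero (k : Fin (b + 1)) : mergedLabel k 0 = mergedLabel k k.succ := by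
  simp [mergedLabel]

theorem mergedLabel_comp_succAbove_injective_iff {k l : Fin (b + 1)} :
    Function.Injective (mergedLabel k ∘ l.succ.succAbove) ↔ k = l := by
  constructor
  · intro hinj
    by_contra hkl
    obtain ⟨i, hi⟩ := Fin.exists_succAbove_eq (Fin.succ_ne_zero l).symm
    obtain ⟨j, hj⟩ := Fin.exists_succAbove_eq (Fin.succ_injective _ |>.ne hkl)
    have hij : i = j := hinj (by simp only [Function.comp_apply, hi, hj, mergedLabel_zero])
    exact Fin.succ_ne_zero k (by rw [← hj, ← hij, hi])
  · rintro rfl i j hij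
    have hi := Fin.succAbove_ne k.succ i
    have hj := Fin.succAbove_ne k.succ j
    apply Fin.succAbove_right_injective (p := k.succ)
    simp only [mergedLabel, Function.comp_apply, Nat.cast_inj, Fin.val_inj] at hij
    grind [Function.update_apply]

theorem trace_rho_comp_permAct {n : Fin (b + 2) → ℕ} (hn : ∀ j, 0 < n j)
    (g : Equiv.Perm (Fin (∑ j, n j)))
    (hW : ∀ f ∈ hookSpan (∑ j, n j) b, (rho n ∘ₗ permAct g) f ∈ hookSpan (∑ j, n j) b) :
    LinearMap.trace ℚ (hookSpan (∑ j, n j) b) ((rho n ∘ₗ permAct g).restrict hW)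
      = (transitionMatrix (block n) g).adjugate.trace - (transitionMatrix (block n) g).det := by
  set P := transitionMatrix (block n) g
  let s : Fin (b + 2) → Fin (∑ j, n j) := fun j => emb n j ⟨0, hn j⟩
  have hs : ∀ j, block n (s j) = j := fun j => block_emb j _
  have hblock : ∀ k : Fin (b + 2), block n ∘ s ∘ k.succAbove = k.succAbove :=
    fun k => funext fun i => hs _
  have hP1 : P *ᵥ 1 = 1 := transitionMatrix_mulVec_one (fun j => ⟨s j, hs j⟩) g
  let φ : Fin (b + 1) → MvPolynomial (Fin (∑ j, n j)) ℚ →ₗ[ℚ] ℚ := fun k =>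
    blockEval n (mergedLabel k)
  have hφD : ∀ k l : Fin (b + 1), φ k (rho n (Delta (s ∘ l.succ.succAbove)))
      = (vandermonde (mergedLabel k ∘ l.succ.succAbove)).det := fun k l => by
    rw [blockEval_rho, blockEval_Delta, hblock]
  have hφD_ne_zero : ∀ k l, φ k (rho n (Delta (s ∘ l.succ.succAbove))) ≠ 0 ↔ k = l := fun k l => by
    rw [hφD, det_vandermonde_ne_zero_iff, mergedLabel_comp_succAbove_injective_iff]
  have hφT : ∀ k : Fin (b + 1), φ k ((rho n ∘ₗ permAct g) (rho n (Delta (s ∘ k.succ.succAbove))))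
      = (P.adjugate k.succ k.succ - P.adjugate 0 k.succ)
        * φ k (rho n (Delta (s ∘ k.succ.succAbove))) := fun k => by
    rw [LinearMap.comp_apply, blockEval_rho_permAct_rho_Delta _ _
      ((hblock _).symm ▸ Fin.succAbove_right_injective), hblock, det_submatrix_succAbove_mul P _
      (Fin.succ_ne_zero k) (by ext; simp [mergedLabel_zero]), hφD]
    rfl
  have hT : hookSpan (∑ j, n j) b ≤ (Submodule.span ℚ (Set.range fun k : Fin (b + 1) =>
      rho n (Delta (s ∘ k.succ.succAbove)))).comap (rho n ∘ₗ permAct g) := by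
    refine Submodule.span_le.2 ?_
    rintro _ ⟨t, -, rfl⟩
    simpa [permAct_Delta] using rho_Delta_mem_span hs _
  rw [trace_restrict_eq_sum_div hW (fun k => rho_Delta_mem_hookSpan _) (fun f hf => hT hf)
    (fun k l hkl => not_not.1 fun h => hkl ((hφD_ne_zero k l).1 h))
    (fun k => (hφD_ne_zero k k).2 rfl), ← sum_adjugate_row hP1 0]
  simp_rw [hφT, mul_div_cancel_right₀ _ ((hφD_ne_zero _ _).2 rfl)]
  simp [Matrix.trace, Fin.sum_univ_succ]

end TraceFormula

section ElementarySymmetric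

variable {α F : Type*} [DecidableEq α]

theorem esymVal_card [CommRing F] (A : Finset α) (v : α → F) :
    esymVal A #A v = ∏ i ∈ A, v i := by
  simp [esymVal]

theorem esymVal_card_sub_one [CommRing F] {A : Finset α} (hA : A.Nonempty) (v : α → F) :
    esymVal A (#A - 1) v = ∑ k ∈ A, ∏ i ∈ A.erase k, v i := by
  have himage : A.powersetCard (#A - 1) = A.image A.erase := by
    ext B
    simp only [mem_powersetCard, mem_image]
    constructor
    · rintro ⟨hBA, hB⟩
      obtain ⟨k, hk⟩ : ∃ k, A \ B = {k} := card_eq_one.1 (by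
        have := hA.card_pos
        rw [card_sdiff_of_subset hBA]; omega)
      have hkA : k ∈ A := (mem_sdiff.1 (hk ▸ mem_singleton_self k)).1
      exact ⟨k, hkA, by rw [← sdiff_singleton_eq_erase, ← hk, Finset.sdiff_sdiff_eq_self hBA]⟩
    · rintro ⟨k, hk, rfl⟩
      exact ⟨erase_subset k A, card_erase_of_mem hk⟩
  rw [esymVal, himage, sum_image (erase_injOn A)]

theorem sum_prod_erase_div_add_one [Field F] {A : Finset α} (hA : A.Nonempty) {v : α → F}
    (hv : ∀ i ∈ A, v i + 1 ≠ 0) :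
    ∑ k ∈ A, ∏ i ∈ A.erase k, v i / (v i + 1)
      = (∏ i ∈ A, (v i + 1))⁻¹ * (#A * esymVal A #A v + esymVal A (#A - 1) v) := by
  have hterm : ∀ k ∈ A, ∏ i ∈ A.erase k, v i / (v i + 1)
      = (∏ i ∈ A, (v i + 1))⁻¹ * (∏ i ∈ A, v i + ∏ i ∈ A.erase k, v i) := fun k hk => by
    have hne : ∏ i ∈ A.erase k, (v i + 1) ≠ 0 := prod_ne_zero_iff.2 fun i hi =>
      hv i (mem_of_mem_erase hi)
    rw [prod_div_distrib, ← mul_prod_erase A _ hk, ← mul_prod_erase A v hk]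
    field_simp [hv k hk]
  rw [sum_congr rfl hterm, ← mul_sum, sum_add_distrib, sum_const, nsmul_eq_mul, esymVal_card,
    esymVal_card_sub_one hA]

end ElementarySymmetric

section CycleThroughBlocks

theorem transitionMatrix_block_eq_weightedCycle {m : ℕ} {n : Fin (m + 1) → ℕ} {c : Fin (m + 1)}
    {g : Equiv.Perm (Fin (∑ j, n j))} {s : Fin (m + 1) → Fin (∑ j, n j)}
    (hs : ∀ j, block n (s j) = j) (hgs : ∀ j, block n (g (s j)) = c.cycleRange j)
    (hfix : ∀ a, a ≠ s (block n a) → g a = a) :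
    transitionMatrix (block n) g
      = weightedCycle c (fun j => 1 - (n j : ℚ)⁻¹) (fun j => (n j : ℚ)⁻¹) := by
  ext j l
  have hg : ∀ a, block n a = block n (s j) → a ≠ s j → block n (g a) = block n (s j) :=
    fun a ha hne => by rw [hfix a (by rwa [ha, hs]), ha]
  have h := transitionMatrix_apply_of_forall_ne hg l
  rw [card_filter_block_eq, hgs, hs] at h
  rw [h, weightedCycle_apply]

theorem firstL_eq_Iic {c : Fin p} : firstL p (c + 1) = Iic c := by
  ext j
  simp [firstL]

theorem trace_adjugate_sub_det_weightedCycle_inv {b : ℕ} {n : Fin (b + 2) → ℕ} (hn : ∀ j, 0 < n j)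
    (c : Fin (b + 2)) :
    (weightedCycle c (fun j => 1 - (n j : ℚ)⁻¹) (fun j => (n j : ℚ)⁻¹)).adjugate.trace
        - (weightedCycle c (fun j => 1 - (n j : ℚ)⁻¹) (fun j => (n j : ℚ)⁻¹)).det
      = (∏ i ∈ Iic c, (n i : ℚ))⁻¹ *
        (((b : ℚ) + 1) * esymVal (Iic c) (c + 1) (fun i => (n i : ℚ) - 1)
          + esymVal (Iic c) c (fun i => (n i : ℚ) - 1)
          + (-1 : ℚ) ^ (c : ℕ) * ((b : ℚ) - c)) := by
  have hn' : ∀ j, (n j : ℚ) ≠ 0 := fun j => by exact_mod_cast (hn j).ne'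
  have hloop : ∀ j, 1 - (n j : ℚ)⁻¹ = ((n j : ℚ) - 1) / ((n j : ℚ) - 1 + 1) := fun j => by
    field_simp [hn' j]
    ring
  have hcard : #(Iic c) = c + 1 := Fin.card_Iic c
  have hsum := sum_prod_erase_div_add_one (A := Iic c) nonempty_Iic
    (v := fun j => (n j : ℚ) - 1) (fun j _ => by simpa using hn' j)
  have htop := esymVal_card (Iic c) fun j => (n j : ℚ) - 1
  rw [hcard] at hsum htop
  rw [trace_adjugate_sub_det_weightedCycle (fun j => by ring), prod_inv_distrib]
  simp_rw [hloop]
  rw [hsum, prod_div_distrib, ← htop]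
  simp only [sub_add_cancel, Nat.add_sub_cancel]
  push_cast
  ring

end CycleThroughBlocks

theorem sphericalFunction_hook_p_eq_b_add_two_general (b ℓ : ℕ) (n : Fin (b + 2) → ℕ)
    (hn : ∀ j, 0 < n j) (hℓ : 1 ≤ ℓ) (hℓb : ℓ ≤ b + 2)
    (g : Equiv.Perm (Fin (∑ t, n t)))
    (hg1 : ∀ j k : Fin (b + 2), (k : ℕ) = (j : ℕ) + 1 → (k : ℕ) < ℓ →
      g (emb n j ⟨0, hn j⟩) = emb n k ⟨0, hn k⟩)
    (hg2 : ∀ j j' : Fin (b + 2), (j : ℕ) = ℓ - 1 → (j' : ℕ) = 0 →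
      g (emb n j ⟨0, hn j⟩) = emb n j' ⟨0, hn j'⟩)
    (hg3 : ∀ a, (∀ j : Fin (b + 2), (j : ℕ) < ℓ → a ≠ emb n j ⟨0, hn j⟩) → g a = a)
    (hW : ∀ f ∈ hookSpan (∑ t, n t) b,
      ((rho n).comp (permAct g)) f ∈ hookSpan (∑ t, n t) b) :
    LinearMap.trace ℚ (hookSpan (∑ t, n t) b) (((rho n).comp (permAct g)).restrict hW)
      = (∏ i ∈ firstL (b + 2) ℓ, (n i : ℚ))⁻¹ *
        (((b : ℚ) + 1) * esymVal (firstL (b + 2) ℓ) ℓ (fun i => (n i : ℚ) - 1)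
          + esymVal (firstL (b + 2) ℓ) (ℓ - 1) (fun i => (n i : ℚ) - 1)
          + (-1 : ℚ) ^ (ℓ - 1) * ((b : ℚ) - (ℓ : ℚ) + 1)) := by
  obtain ⟨c, rfl⟩ : ∃ c : Fin (b + 2), ℓ = c + 1 :=
    ⟨⟨ℓ - 1, by omega⟩, (Nat.sub_add_cancel hℓ).symm⟩
  have hgs : ∀ j, block n (g (emb n j ⟨0, hn j⟩)) = c.cycleRange j := by
    intro j
    rcases lt_trichotomy j c with hj | rfl | hj
    · rw [hg1 j (c.cycleRange j) (Fin.coe_cycleRange_of_lt hj)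
        (by rw [Fin.coe_cycleRange_of_lt hj]; omega), block_emb]
    · rw [hg2 j 0 rfl rfl, block_emb, Fin.cycleRange_self]
    · rw [hg3 _ fun k hk h => ?_, block_emb, Fin.cycleRange_of_gt hj]
      have hjk := congrArg (block n) h
      rw [block_emb, block_emb] at hjk
      omega
  have hfix : ∀ a, a ≠ emb n (block n a) ⟨0, hn _⟩ → g a = a := by
    refine fun a ha => hg3 a fun j _ h => ha ?_
    have hblock : block n a = j := h ▸ block_emb j _
    rw [hblock, h]
  rw [trace_rho_comp_permAct hn, transitionMatrix_block_eq_weightedCycle (fun j => block_emb j _)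
    hgs hfix, trace_adjugate_sub_det_weightedCycle_inv hn, firstL_eq_Iic, Nat.add_sub_cancel]
  push_cast
  ring

theorem sphericalFunction_hook_p_eq_b_add_two (p b ℓ : ℕ) (n : Fin p → ℕ) (hn : ∀ j, 0 < n j)
    (hp : p = b + 2) (hℓ2 : 2 ≤ ℓ) (hℓp : ℓ ≤ b + 1)
    (g : Equiv.Perm (Fin (∑ t, n t)))
    (hg1 : ∀ j k : Fin p, (k : ℕ) = (j : ℕ) + 1 → (k : ℕ) < ℓ →
      g (emb n j ⟨0, hn j⟩) = emb n k ⟨0, hn k⟩)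
    (hg2 : ∀ j j' : Fin p, (j : ℕ) = ℓ - 1 → (j' : ℕ) = 0 →
      g (emb n j ⟨0, hn j⟩) = emb n j' ⟨0, hn j'⟩)
    (hg3 : ∀ a, (∀ j : Fin p, (j : ℕ) < ℓ → a ≠ emb n j ⟨0, hn j⟩) → g a = a)
    (hW : ∀ f ∈ hookSpan (∑ t, n t) b,
      ((rho n).comp (permAct g)) f ∈ hookSpan (∑ t, n t) b) :
    LinearMap.trace ℚ (hookSpan (∑ t, n t) b) (((rho n).comp (permAct g)).restrict hW)
      = (∏ i ∈ firstL p ℓ, (n i : ℚ))⁻¹ *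
        (((b : ℚ) + 1) * esymVal (firstL p ℓ) ℓ (fun i => (n i : ℚ) - 1)
          + esymVal (firstL p ℓ) (ℓ - 1) (fun i => (n i : ℚ) - 1)
          + (-1 : ℚ) ^ (ℓ - 1) * ((b : ℚ) - (ℓ : ℚ) + 1)) := by
  subst hp
  exact sphericalFunction_hook_p_eq_b_add_two_general b ℓ n hn (by omega) (by omega) g hg1 hg2
    hg3 hW

end
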